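/- arXiv:1704.05065 — 3 statements merged into one kernel-verified Lean document; each statement's English description precedes it below -/
import Mathlib

section
/- For all integers r, p, q and every coefficient function f : ℤ → ℂ, the triple commutator satisfies [L_r, [L_p, L_q]] f = (C ⊗ L_{p+q+r}) f, where C(s) = A_{p+r,q+r}(s) A_{r,0}(s) − A_{p,q}(s) A_{p+q,0}(s) + Γ_0(s) (A_{p+r,q+r}(s) − A_{p,q}(s)) and A_{m,n}(s) = Γ_0(s+m) − Γ_0(s+n). -/
/-!
Centre everything at `s = k - (p + q + r)`. For `(x, y, z)` a permutation of `(p, q, r)`, the product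
`L_x L_y L_z` sends `f` to `-Γ₀(s+y+z) Γ₀(s+z) Γ₀(s) f(s)` at `k`, so the claim is a polynomial
identity in the values of `Γ₀`: the terms of `C(s)` that carry a factor `Γ₀(s)` cancel. No property
of the Gamma function is involved.
-/

open Complex

/-- `Γ₀(ℓ) = Γ(aℓ+1)/Γ(a(ℓ-1)+1)` with the (total) complex Gamma function. -/
noncomputable def Gamma0 (a : ℝ) (ℓ : ℤ) : ℂ :=
  Complex.Gamma ((a : ℂ) * (ℓ : ℂ) + 1) / Complex.Gamma ((a : ℂ) * ((ℓ : ℂ) - 1) + 1)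

/-- The fractional Witt generator `L_n`, acting on coefficient functions:
`(L_n f)(k) = -Γ₀(k-n) f(k-n)`. -/
noncomputable def Lgen (a : ℝ) (n : ℤ) (f : ℤ → ℂ) : ℤ → ℂ :=
  fun k => -Gamma0 a (k - n) * f (k - n)

/-- `(φ ⊗ L_n)(f)(k) = φ(k-n) (L_n f)(k)`. -/
noncomputable def tensorL (a : ℝ) (φ : ℤ → ℂ) (n : ℤ) (f : ℤ → ℂ) : ℤ → ℂ :=
  fun k => φ (k - n) * Lgen a n f k

/-- `A_{n,m}(ℓ) = Γ₀(ℓ+n) − Γ₀(ℓ+m)`. -/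
noncomputable def Acoef (a : ℝ) (n m : ℤ) (ℓ : ℤ) : ℂ :=
  Gamma0 a (ℓ + n) - Gamma0 a (ℓ + m)

/-- the triple commutator `[L_r, [L_p, L_q]] f = (C ⊗ L_{p+q+r}) f`, where
`C(s) = A_{p+r,q+r}(s) A_{r,0}(s) − A_{p,q}(s) A_{p+q,0}(s) + Γ₀(s)(A_{p+r,q+r}(s) − A_{p,q}(s))`. -/
theorem fractional_witt_triple_commutator (a : ℝ) (r p q : ℤ) (f : ℤ → ℂ) (k : ℤ) :
    (Lgen a r (fun j => Lgen a p (Lgen a q f) j - Lgen a q (Lgen a p f) j) k -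
        (Lgen a p (Lgen a q (Lgen a r f)) k - Lgen a q (Lgen a p (Lgen a r f)) k)) =
      tensorL a
        (fun s => Acoef a (p + r) (q + r) s * Acoef a r 0 s
            - Acoef a p q s * Acoef a (p + q) 0 s
            + Gamma0 a s * (Acoef a (p + r) (q + r) s - Acoef a p q s))
        (p + q + r) f k := by
  obtain ⟨s, rfl⟩ : ∃ s, k = s + (p + q + r) := ⟨k - (p + q + r), by ring⟩
  simp only [Lgen, tensorL, Acoef]
  have h₁ : s + (p + q + r) - r = s + (p + q) := by ring
  have h₂ : s + (p + q + r) - p = s + (q + r) := by ring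
  have h₃ : s + (p + q + r) - q = s + (p + r) := by ring
  have h₄ : s + (p + q) - p = s + q := by ring
  have h₅ : s + (p + q) - q = s + p := by ring
  have h₆ : s + (q + r) - q = s + r := by ring
  have h₇ : s + (p + r) - p = s + r := by ring
  simp only [h₁, h₂, h₃, h₄, h₅, h₆, h₇, add_sub_cancel_right, add_zero]
  ring
end

section
/- Let 0 < a < 1 be real and let p, q be integers. Then A_{p,q}(s) = Γ_p(s) − Γ_q(s) tends to 0 as the real variable s tends to +∞. -/
/-!
Write `R(x) = Γ(x+a)/Γ(x)`, so that `Γ_p(s) = R(a(s+p-1)+1)` and `Γ_{p+1}(s) - Γ_p(s)` is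
`R(x+a) - R(x)` at `x = a(s+p-1)+1`. Log-convexity of `Γ` enters twice. It makes `R` monotone
(`gammaQuot_mono`), so for `a < 1` one has `0 ≤ R(x+a) - R(x) ≤ R(x+1) - R(x)`; and it gives
`R(x) ≤ x^a` (`gammaQuot_le_rpow`). The functional equation yields `R(x+1) - R(x) = a R(x)/x`,
which is at most `a x^(a-1)` and hence tends to `0`. So consecutive differences
`Γ_{p+1} - Γ_p` tend to `0`, and the general case follows by telescoping.
-/

open Filter Real

/-- `Γ_p(s) = Γ(a(s+p)+1)/Γ(a(s+p−1)+1)` with the (total) real Gamma function. -/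
noncomputable def GammaPR (a : ℝ) (p : ℤ) (s : ℝ) : ℝ :=
  Real.Gamma (a * (s + p) + 1) / Real.Gamma (a * (s + p - 1) + 1)

/-- The quotient `R(x) = Γ(x+a)/Γ(x)`. -/
noncomputable def gammaQuot (a x : ℝ) : ℝ := Real.Gamma (x + a) / Real.Gamma x

lemma gammaQuot_mono {a x y : ℝ} (ha : 0 < a) (hx : 0 < x) (hxy : x < y) :
    gammaQuot a x ≤ gammaQuot a y := by
  have hy : 0 < y := hx.trans hxy
  have hd : 0 < y + a - x := by linarith
  -- `x + a` and `y` are the convex combinations of `x` and `y + a` with weights `u, v` and `v, u`.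
  set u := (y - x) / (y + a - x) with hu
  set v := a / (y + a - x) with hv
  have hu0 : 0 ≤ u := div_nonneg (by linarith) hd.le
  have hv0 : 0 ≤ v := div_nonneg ha.le hd.le
  have huv : u + v = 1 := by rw [hu, hv]; field_simp; ring
  have e1 : u * x + v * (y + a) = x + a := by rw [hu, hv]; field_simp; ring
  have e2 : v * x + u * (y + a) = y := by rw [hu, hv]; field_simp; ring
  have hxm : x ∈ Set.Ioi (0 : ℝ) := hx
  have hym : y + a ∈ Set.Ioi (0 : ℝ) := add_pos hy ha
  have h1 := Real.convexOn_log_Gamma.2 hxm hym hu0 hv0 huv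
  have h2 := Real.convexOn_log_Gamma.2 hxm hym hv0 hu0 (by linarith)
  simp only [smul_eq_mul, Function.comp_apply, e1, e2] at h1 h2
  have g1 := Real.Gamma_pos_of_pos hx
  have g2 := Real.Gamma_pos_of_pos hy
  have g3 := Real.Gamma_pos_of_pos (add_pos hx ha)
  have g4 := Real.Gamma_pos_of_pos (add_pos hy ha)
  unfold gammaQuot
  rw [div_le_div_iff₀ g1 g2, ← Real.log_le_log_iff (by positivity) (by positivity),
    Real.log_mul g3.ne' g2.ne', Real.log_mul g4.ne' g1.ne']
  have hv' : v = 1 - u := by linarith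
  rw [hv'] at h1 h2
  linarith

lemma gammaQuot_le_rpow {a x : ℝ} (ha₀ : 0 < a) (ha₁ : a < 1) (hx : 0 < x) :
    gammaQuot a x ≤ x ^ a := by
  have g := Real.Gamma_pos_of_pos hx
  have h := Real.Gamma_mul_add_mul_le_rpow_Gamma_mul_rpow_Gamma hx (by linarith : 0 < x + 1)
    (sub_pos.2 ha₁) ha₀ (by ring)
  have e : (1 - a) * x + a * (x + 1) = x + a := by ring
  rw [e, Real.Gamma_add_one hx.ne', Real.mul_rpow hx.le g.le, mul_left_comm,
    ← Real.rpow_add g, sub_add_cancel, Real.rpow_one] at h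
  exact (div_le_iff₀ g).2 h

lemma gammaQuot_add_one_sub {a x : ℝ} (ha : 0 < a) (hx : 0 < x) :
    gammaQuot a (x + 1) - gammaQuot a x = a * gammaQuot a x / x := by
  have g := (Real.Gamma_pos_of_pos hx).ne'
  unfold gammaQuot
  rw [add_right_comm, Real.Gamma_add_one hx.ne', Real.Gamma_add_one (add_pos hx ha).ne']
  field_simp
  ring

lemma tendsto_gammaQuot_step {a : ℝ} (ha₀ : 0 < a) (ha₁ : a < 1) :
    Tendsto (fun x => gammaQuot a (x + a) - gammaQuot a x) atTop (nhds 0) := by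
  have hb : Tendsto (fun x : ℝ => a * x ^ (-(1 - a))) atTop (nhds 0) := by
    simpa using (tendsto_rpow_neg_atTop (sub_pos.2 ha₁)).const_mul a
  refine tendsto_of_tendsto_of_tendsto_of_le_of_le' tendsto_const_nhds hb ?_ ?_
  · filter_upwards [eventually_gt_atTop 0] with x hx
    exact sub_nonneg.2 (gammaQuot_mono ha₀ hx (by linarith))
  · filter_upwards [eventually_gt_atTop 0] with x hx
    have h1 : gammaQuot a (x + a) ≤ gammaQuot a (x + 1) :=
      gammaQuot_mono ha₀ (by linarith) (by linarith)
    calc gammaQuot a (x + a) - gammaQuot a x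
        ≤ gammaQuot a (x + 1) - gammaQuot a x := by linarith
      _ = a * gammaQuot a x / x := gammaQuot_add_one_sub ha₀ hx
      _ ≤ a * x ^ a / x := by
          gcongr
          exact gammaQuot_le_rpow ha₀ ha₁ hx
      _ = a * x ^ (-(1 - a)) := by
          rw [neg_sub, Real.rpow_sub_one hx.ne', mul_div_assoc]

lemma tendsto_GammaPR_succ_sub {a : ℝ} (ha₀ : 0 < a) (ha₁ : a < 1) (p : ℤ) :
    Tendsto (fun s : ℝ => GammaPR a (p + 1) s - GammaPR a p s) atTop (nhds 0) := by
  have hl : Tendsto (fun s : ℝ => a * (s + (p - 1)) + 1) atTop atTop :=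
    tendsto_atTop_add_const_right _ _
      ((tendsto_atTop_add_const_right _ _ tendsto_id).const_mul_atTop ha₀)
  refine ((tendsto_gammaQuot_step ha₀ ha₁).comp hl).congr fun s => ?_
  simp only [Function.comp_apply, gammaQuot, GammaPR]
  push_cast
  congr 3 <;> ring_nf

/-- for `0 < a < 1`, `A_{p,q}(s) = Γ_p(s) − Γ_q(s) → 0` as `s → +∞`. -/
theorem ApqR_tendsto_zero (a : ℝ) (ha₀ : 0 < a) (ha₁ : a < 1) (p q : ℤ) :
    Tendsto (fun s : ℝ => GammaPR a p s - GammaPR a q s) atTop (nhds 0) := by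
  have key : ∀ r : ℤ, Tendsto (fun s : ℝ => GammaPR a r s - GammaPR a 0 s) atTop (nhds 0) := by
    intro r
    induction r using Int.induction_on with
    | zero => simp
    | succ n ih =>
      simpa using (tendsto_GammaPR_succ_sub ha₀ ha₁ (n : ℤ)).add ih
    | pred n ih =>
      simpa using ih.sub (tendsto_GammaPR_succ_sub ha₀ ha₁ (-(n : ℤ) - 1))
  simpa using (key p).sub (key q)
end

section
/- Let a be a real number and let s, p be real numbers with 0 < s and |p| < s. Then the generalized binomial series converges to (s+p)^a: the family k ↦ C(a,k) · s^{a−k} · p^k (k ranging over ℕ) has sum (s+p)^a, where C(a,k) = a(a−1)⋯(a−k+1)/k! is the generalized binomial coefficient and powers of s are real powers. -/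
/-!
Since `0 < s`, factor `(s + p) ^ a = s ^ a * (1 + p / s) ^ a` and substitute `x = p / s`, with
`|x| < 1`, into Mathlib's expansion `Real.one_add_rpow_hasFPowerSeriesOnBall_zero` of
`(1 + x) ^ a`. Its coefficients `Ring.choose a k` are the `genBinom a k`, and
`s ^ a * (p / s) ^ k = s ^ (a - k) * p ^ k`.
-/

open Real

/-- The generalized binomial coefficient `C(a,k) = a(a−1)⋯(a−k+1)/k!`. -/
noncomputable def genBinom (a : ℝ) (k : ℕ) : ℝ :=
  (∏ i ∈ Finset.range k, (a - i)) / (Nat.factorial k)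

lemma ringChoose_eq_genBinom (a : ℝ) (k : ℕ) : Ring.choose a k = genBinom a k := by
  rw [Ring.choose_eq_smul, genBinom, ← Polynomial.aeval_eq_smeval, Polynomial.aeval_def,
    Polynomial.eval₂_eq_eval_map, descPochhammer_map, descPochhammer_eval_eq_prod_range,
    smul_eq_mul, div_eq_inv_mul]

/-- the generalized binomial series: for `0 < s` and `|p| < s`,
the family `k ↦ C(a,k) · s^{a−k} · p^k` has sum `(s+p)^a`. -/
theorem generalized_binomial_series (a s p : ℝ) (hs : 0 < s) (hp : |p| < s) :
    HasSum (fun k : ℕ => genBinom a k * s ^ (a - k) * p ^ k) ((s + p) ^ a) := by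
  have hx : |p / s| < 1 := by rwa [abs_div, abs_of_pos hs, div_lt_one hs]
  have hmem : p / s ∈ Metric.eball (0 : ℝ) 1 := by
    rw [← ENNReal.ofReal_one, Metric.eball_ofReal]
    simpa only [Metric.mem_ball, dist_zero_right, Real.norm_eq_abs] using hx
  have h := (Real.one_add_rpow_hasFPowerSeriesOnBall_zero (a := a)).hasSum hmem
  have h2 := h.mul_left (s ^ a)
  have h1x : 0 ≤ 1 + p / s := by linarith [(abs_lt.mp hx).1]
  rw [zero_add, ← mul_rpow hs.le h1x, mul_add, mul_one, mul_div_cancel₀ _ hs.ne'] at h2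
  convert! h2 using 2 with k
  rw [binomialSeries_apply, ringChoose_eq_genBinom, rpow_sub_natCast hs.ne']
  simp only [List.ofFn_const, List.prod_replicate, smul_eq_mul, div_pow]
  ring
end
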